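/- Let f : ℝ^d → ℝ satisfy 0 ≤ f(t) ≤ 1/(1 + ‖t‖_∞^{d+1}) for all t ∈ ℝ^d. Fix 0 ≤ δ < 1/2. Let (v_i)_{i ∈ ℕ*} be pairwise distinct elements of ℤ^d, let x_i ∈ [−1,1]^d for each i, let ε ∈ [−δ, δ], and let a > 0. Then for every i ∈ ℕ*, the sum Σ_{j ∈ ℕ*, j ≠ i} f(a · (v_i − v_j + ε(x_i − x_j))) is at most 2^d · d · Σ_{j ∈ ℕ} (j + 3/2)^{d−1} / (1 + a^{d+1} (j + 1 − 2δ)^{d+1}). -/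

import Mathlib

/-!
Write `w = vᵢ - vⱼ`, a nonzero integer vector, and group the indices `j ≠ i` by the shell
`‖w‖_∞ = m + 1`. Since `‖ε (xᵢ - xⱼ)‖_∞ ≤ 2δ`, every index in this shell contributes at most
`1 / (1 + a^(d+1) (m + 1 - 2δ)^(d+1))`. As the `vⱼ` are distinct, the shell contains at most
`(2m+3)^d - (2m+1)^d ≤ 2 d (2m+3)^(d-1) = 2^d d (m + 3/2)^(d-1)` indices
(`card_shell_le`). The series over `m` converges by comparison with `∑ 1/(m+1)²`
(`summable_shell`), so its partial sums are bounded by its sum, and hence so are all finite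
partial sums of the left-hand side.
-/

/-- The sup norm of an integer vector, as a natural number. -/
def supNat {d : ℕ} (w : Fin d → ℤ) : ℕ := Finset.univ.sup fun k => (w k).natAbs

lemma supNat_le_iff {d : ℕ} (w : Fin d → ℤ) (m : ℕ) :
    supNat w ≤ m ↔ w ∈ Fintype.piFinset fun _ : Fin d => Finset.Icc (-(m : ℤ)) m := by
  simp only [supNat, Finset.sup_le_iff, Finset.mem_univ, true_implies, Fintype.mem_piFinset,
    Finset.mem_Icc]
  exact forall_congr' fun k => by omega

lemma pow_sub_pow_le_mul (n : ℕ) {x y : ℝ} (hy : 0 ≤ y) (hxy : y ≤ x) :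
    x ^ (n + 1) - y ^ (n + 1) ≤ (n + 1) * (x - y) * x ^ n := by
  induction n with
  | zero => simp
  | succ n ih =>
    have h1 : y ^ (n + 1) ≤ x ^ (n + 1) := pow_le_pow_left₀ hy hxy _
    have h2 := mul_le_mul_of_nonneg_left ih (hy.trans hxy)
    have h3 := mul_le_mul_of_nonneg_left h1 (sub_nonneg.2 hxy)
    push_cast
    calc x ^ (n + 1 + 1) - y ^ (n + 1 + 1)
        = x * (x ^ (n + 1) - y ^ (n + 1)) + (x - y) * y ^ (n + 1) := by ring
      _ ≤ x * ((n + 1) * (x - y) * x ^ n) + (x - y) * x ^ (n + 1) := add_le_add h2 h3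
      _ = _ := by ring

lemma card_shell_le {d : ℕ} (hd : 1 ≤ d) (m : ℕ) (T : Finset (Fin d → ℤ))
    (hT : ∀ w ∈ T, supNat w = m + 1) :
    (T.card : ℝ) ≤ 2 ^ d * d * ((m : ℝ) + 3 / 2) ^ (d - 1) := by
  let B : ℕ → Finset (Fin d → ℤ) := fun m =>
    Fintype.piFinset fun _ : Fin d => Finset.Icc (-(m : ℤ)) m
  have hB : ∀ m, (B m).card = (2 * m + 1) ^ d := fun m => by
    simp only [B, Fintype.card_piFinset, Int.card_Icc, Finset.prod_const, Finset.card_univ,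
      Fintype.card_fin]
    congr 1
    omega
  have hsub : T ⊆ B (m + 1) \ B m := fun w hw => by
    have h := hT w hw
    rw [Finset.mem_sdiff, ← supNat_le_iff, ← supNat_le_iff]
    omega
  have hBB : B m ⊆ B (m + 1) := fun w hw => by
    rw [← supNat_le_iff] at hw ⊢
    omega
  have h1 := Finset.card_le_card hsub
  have h2 := Finset.card_sdiff_add_card_eq_card hBB
  rw [hB, hB] at h2
  have h3 : (T.card : ℝ) + (2 * m + 1) ^ d ≤ (2 * (m + 1) + 1) ^ d := by
    exact_mod_cast (by omega : T.card + (2 * m + 1) ^ d ≤ (2 * (m + 1) + 1) ^ d)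
  obtain ⟨n, rfl⟩ : ∃ n, d = n + 1 := ⟨d - 1, by omega⟩
  have h4 := pow_sub_pow_le_mul n (x := 2 * ((m : ℝ) + 1) + 1) (y := 2 * m + 1)
    (by positivity) (by linarith)
  calc (T.card : ℝ) ≤ _ := (le_sub_iff_add_le.2 h3).trans h4
    _ = (n + 1) * 2 * (2 * (m + 3 / 2)) ^ n := by ring
    _ = _ := by
      rw [mul_pow]
      push_cast
      ring

lemma summable_shell (d : ℕ) (hd : 1 ≤ d) {δ a : ℝ} (hδ0 : 0 ≤ δ) (hδ : δ < 1 / 2)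
    (ha : 0 < a) :
    Summable fun j : ℕ => ((j : ℝ) + 3 / 2) ^ (d - 1)
      / (1 + a ^ (d + 1) * ((j : ℝ) + 1 - 2 * δ) ^ (d + 1)) := by
  obtain ⟨n, rfl⟩ : ∃ n, d = n + 1 := ⟨d - 1, by omega⟩
  simp only [Nat.add_sub_cancel]
  set r : ℝ := 1 - 2 * δ with hr
  have hr0 : 0 < r := by linarith
  have hs : Summable fun j : ℕ => ((3 / 2 / r) ^ n / (a ^ (n + 2) * r ^ 2)) *
      (1 / ((j + 1 : ℕ) : ℝ) ^ 2) :=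
    ((summable_nat_add_iff 1).2 (Real.summable_one_div_nat_pow.2 one_lt_two)).mul_left _
  refine hs.of_nonneg_of_le (fun j => ?_) fun j => ?_
  · have : 0 < (j : ℝ) + 1 - 2 * δ := by linarith [(Nat.cast_nonneg j : (0 : ℝ) ≤ j)]
    positivity
  · have hj : (0 : ℝ) ≤ j := Nat.cast_nonneg j
    set y : ℝ := (j : ℝ) + 1 - 2 * δ with hy
    have hy0 : 0 < y := by linarith
    have h1 : (j : ℝ) + 3 / 2 ≤ 3 / 2 / r * y := by
      rw [div_mul_eq_mul_div, le_div_iff₀ hr0]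
      nlinarith [mul_nonneg hj hδ0]
    have h2 : r * ((j + 1 : ℕ) : ℝ) ≤ y := by
      push_cast
      nlinarith [mul_nonneg hj hδ0]
    calc ((j : ℝ) + 3 / 2) ^ n / (1 + a ^ (n + 1 + 1) * y ^ (n + 1 + 1))
        ≤ (3 / 2 / r * y) ^ n / (a ^ (n + 2) * y ^ (n + 2)) := by
          gcongr
          linarith
      _ = (3 / 2 / r) ^ n / (a ^ (n + 2) * y ^ 2) := by
          rw [mul_pow, pow_add y]
          field_simp
      _ ≤ (3 / 2 / r) ^ n / (a ^ (n + 2) * (r * ((j + 1 : ℕ) : ℝ)) ^ 2) := by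
          gcongr
      _ = _ := by
          rw [mul_pow]
          field_simp

/-- A perturbation of an integer vector with sup norm `m + 1` by a vector with sup norm at most
`2δ` has sup norm at least `m + 1 - 2δ`. -/
lemma le_norm_of_shell {d : ℕ} (hd : 1 ≤ d) {δ a : ℝ} (ha : 0 < a) (w : Fin d → ℤ)
    (e : Fin d → ℝ) (he : ∀ k, |e k| ≤ 2 * δ) (m : ℕ) (hw : supNat w = m + 1) :
    a * ((m : ℝ) + 1 - 2 * δ) ≤ ‖fun k => a * ((w k : ℝ) + e k)‖ := by
  have : NeZero d := ⟨by omega⟩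
  obtain ⟨k, -, hk⟩ := Finset.exists_mem_eq_sup Finset.univ Finset.univ_nonempty
    fun k => (w k).natAbs
  have hk' : |(w k : ℝ)| = m + 1 := by
    have : (w k).natAbs = m + 1 := by rw [← hk]; exact hw
    rw [← Int.cast_abs, Int.abs_eq_natAbs, this]
    push_cast
    rfl
  refine le_trans ?_ (norm_le_pi_norm (fun k => a * ((w k : ℝ) + e k)) k)
  rw [Real.norm_eq_abs, abs_mul, abs_of_pos ha]
  have h := abs_sub_abs_le_abs_sub (w k : ℝ) (-e k)
  rw [abs_neg, sub_neg_eq_add] at h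
  have := he k
  gcongr
  linarith

/-- Lemma D.2 of the paper: if `0 ≤ f(t) ≤ 1/(1+‖t‖_∞^(d+1))`, `0 ≤ δ < 1/2`, the `vᵢ`
are pairwise distinct in `ℤ^d`, `xᵢ ∈ [-1,1]^d`, `ε ∈ [-δ,δ]` and `a > 0`, then
`Σ_{j ≠ i} f(a(vᵢ - vⱼ + ε(xᵢ - xⱼ))) ≤ 2^d d Σ_{j∈ℕ} (j+3/2)^(d-1)/(1+a^(d+1)(j+1-2δ)^(d+1))`. -/
theorem stmt3 (d : ℕ) (hd : 1 ≤ d) (f : (Fin d → ℝ) → ℝ)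
    (hf0 : ∀ t, 0 ≤ f t) (hf : ∀ t, f t ≤ 1 / (1 + ‖t‖ ^ (d + 1)))
    (δ : ℝ) (hδ : δ ∈ Set.Ico (0 : ℝ) (1/2))
    (v : ℕ → Fin d → ℤ) (hv : Function.Injective v)
    (x : ℕ → Fin d → ℝ) (hx : ∀ i k, x i k ∈ Set.Icc (-1 : ℝ) 1)
    (ε : ℝ) (hε : ε ∈ Set.Icc (-δ) δ) (a : ℝ) (ha : 0 < a) (i : ℕ) :
    (∑' j : {j : ℕ // j ≠ i},
        f (fun k => a * (((v i k : ℝ) - (v (j : ℕ) k : ℝ)) + ε * (x i k - x (j : ℕ) k))))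
      ≤ 2 ^ d * d *
          ∑' j : ℕ, ((j : ℝ) + 3 / 2) ^ (d - 1)
            / (1 + a ^ (d + 1) * ((j : ℝ) + 1 - 2 * δ) ^ (d + 1)) := by
  obtain ⟨hδ0, hδ1⟩ := hδ
  have hpos : ∀ m : ℕ, 0 < (m : ℝ) + 1 - 2 * δ := fun m => by
    linarith [(Nat.cast_nonneg m : (0 : ℝ) ≤ m)]
  set h : ℕ → ℝ := fun m => 1 / (1 + a ^ (d + 1) * ((m : ℝ) + 1 - 2 * δ) ^ (d + 1)) with hh
  have h0 : ∀ m, 0 ≤ h m := fun m => by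
    have := hpos m
    simp only [hh]
    positivity
  have hsum := summable_shell d hd hδ0 hδ1 ha
  let N : {j : ℕ // j ≠ i} → ℕ := fun j => supNat (v i - v j) - 1
  have hN : ∀ j : {j : ℕ // j ≠ i}, supNat (v i - v (j : ℕ)) = N j + 1 := fun j => by
    have : supNat (v i - v (j : ℕ)) ≠ 0 := fun h0 => by
      refine j.2 (hv (funext fun k => ?_))
      have h1 := (supNat_le_iff _ 0).1 h0.le
      have h2 := Finset.mem_Icc.1 (Fintype.mem_piFinset.1 h1 k)
      simp only [Pi.sub_apply, Nat.cast_zero] at h2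
      omega
    simp only [N]
    omega
  have hle : ∀ j : {j : ℕ // j ≠ i}, f (fun k => a *
      (((v i k : ℝ) - (v (j : ℕ) k : ℝ)) + ε * (x i k - x (j : ℕ) k))) ≤ h (N j) := fun j => by
    have he : ∀ k, |ε * (x i k - x (j : ℕ) k)| ≤ 2 * δ := fun k => by
      have h1 : |ε| ≤ δ := abs_le.2 hε
      have h2 : |x i k - x (j : ℕ) k| ≤ 2 :=
        abs_le.2 ⟨by linarith [(hx i k).1, (hx j k).2], by linarith [(hx i k).2, (hx j k).1]⟩
      rw [abs_mul, mul_comm 2]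
      gcongr
    have hn := le_norm_of_shell hd ha (v i - v j) _ he (N j) (hN j)
    simp only [Pi.sub_apply, Int.cast_sub] at hn
    refine (hf _).trans ?_
    have := hpos (N j)
    simp only [hh]
    rw [← mul_pow]
    gcongr
  refine tsum_le_of_sum_le' ?_ fun S => ?_
  · refine mul_nonneg (by positivity) (tsum_nonneg fun m => ?_)
    have := hpos m
    positivity
  calc _ ≤ ∑ j ∈ S, h (N j) := Finset.sum_le_sum fun j _ => hle j
    _ = ∑ m ∈ S.image N, ((S.filter fun j => N j = m).card : ℝ) * h m := by
        rw [Finset.sum_comp h N]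
        simp only [nsmul_eq_mul]
    _ ≤ ∑ m ∈ S.image N, 2 ^ d * d * (((m : ℝ) + 3 / 2) ^ (d - 1)
          / (1 + a ^ (d + 1) * ((m : ℝ) + 1 - 2 * δ) ^ (d + 1))) := by
        refine Finset.sum_le_sum fun m _ => ?_
        have hinj : Function.Injective fun j : {j : ℕ // j ≠ i} => v i - v (j : ℕ) :=
          fun p q hpq => Subtype.ext (hv (sub_right_injective hpq))
        have hc := card_shell_le hd m ((S.filter fun j => N j = m).image
          fun j : {j : ℕ // j ≠ i} => v i - v (j : ℕ)) fun w hw => by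
            obtain ⟨j, hj, rfl⟩ := Finset.mem_image.1 hw
            rw [hN j, (Finset.mem_filter.1 hj).2]
        rw [Finset.card_image_of_injective _ hinj] at hc
        refine (mul_le_mul_of_nonneg_right hc (h0 m)).trans_eq ?_
        simp only [hh]
        ring
    _ ≤ _ := by
        rw [← Finset.mul_sum]
        refine mul_le_mul_of_nonneg_left (hsum.sum_le_tsum _ fun m _ => ?_) (by positivity)
        have := hpos m
        positivity
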